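/- arXiv:2012.07935 — 3 statements merged into one kernel-verified Lean document; each statement's English description precedes it below -/
import Mathlib

section
/- Let X_1, …, X_k, with k ≥ 2 a power of 2, be nonnegative continuous MHR random variables with finite expectations; run Algorithm 1 on them, obtaining first output β₁ and surviving index i*. Then for every ε ∈ (0, 1/16): Σ_{i ∈ {1,…,k}, i ≠ i*} Con[X_i ≥ log₂(1/ε) · β₁] ≤ 8 · √ε · log₂(1/ε) · β₁. -/
open MeasureTheory ProbabilityTheory

/-- The top `1/p`-quantile of the random variable `X` under `μ`:
`α_p(X) = sup {τ : Pr[X > τ] ≥ 1/p}`. -/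
noncomputable def alphaQ {Ω : Type*} [MeasurableSpace Ω] (μ : Measure Ω) (X : Ω → ℝ) (p : ℝ) : ℝ :=
  sSup {τ : ℝ | ENNReal.ofReal (1 / p) ≤ μ {ω | τ < X ω}}

/-- The largest of the (nonnegative) values `v i`, `i ∈ s`. -/
noncomputable def fmax {ι : Type*} (s : Finset ι) (v : ι → ℝ) : ℝ :=
  s.fold max 0 v

/-- The second largest of the (nonnegative) values `v i`, `i ∈ s` (for `s` of size ≥ 2). -/
noncomputable def fsmax {ι : Type*} [DecidableEq ι] (s : Finset ι) (v : ι → ℝ) : ℝ :=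
  s.fold max 0 fun i => (s.erase i).fold max 0 fun j => min (v i) (v j)

/-- A run of Algorithm 1 on the `k = 2^K` random variables `X_0, …, X_{k-1}`:
`Q 0` is the full index set; in round `t` (`0 ≤ t < K`) the surviving set `Q (t+1) ⊆ Q t` has
size `k/2^{t+1}` and consists of indices of `Q t` with the largest values of
`α_{√(k/2^t)}(X_i)`; `βt t` is the `(k/2^{t+1}+1)`-st largest such value, i.e. the largest
value of `α_{√(k/2^t)}(X_j)` over eliminated `j ∈ Q t \ Q (t+1)`.  `istar` is the unique
surviving index, and the outputs are `β₁ = max_{t < K} βt t` and `β₂ = α_{√2}(X_{istar})`. -/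
def AlgoRun {Ω : Type*} [MeasurableSpace Ω] (μ : Measure Ω) (K : ℕ)
    (X : Fin (2 ^ K) → Ω → ℝ) (Q : ℕ → Finset (Fin (2 ^ K))) (βt : ℕ → ℝ)
    (istar : Fin (2 ^ K)) (β₁ β₂ : ℝ) : Prop :=
  Q 0 = Finset.univ ∧
  (∀ t, t < K →
    Q (t + 1) ⊆ Q t ∧
    (Q (t + 1)).card = 2 ^ (K - (t + 1)) ∧
    (∀ i ∈ Q (t + 1), ∀ j ∈ Q t, j ∉ Q (t + 1) →
      alphaQ μ (X j) (Real.sqrt ((2 ^ K : ℝ) / 2 ^ t)) ≤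
        alphaQ μ (X i) (Real.sqrt ((2 ^ K : ℝ) / 2 ^ t))) ∧
    βt t = (Q t \ Q (t + 1)).fold max 0
      (fun j => alphaQ μ (X j) (Real.sqrt ((2 ^ K : ℝ) / 2 ^ t)))) ∧
  Q K = {istar} ∧
  β₁ = (Finset.range K).fold max 0 βt ∧
  β₂ = alphaQ μ (X istar) (Real.sqrt 2)

/-- `X` is a (nonnegative) continuous random variable with monotone hazard rate: it has a
density `f` (w.r.t. Lebesgue measure), and the hazard rate `f x / (1 - F x)` is non-decreasing
on `{x | F x < 1}`, where `F` is the CDF of `X`. -/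
def IsMHR {Ω : Type*} [MeasurableSpace Ω] (μ : Measure Ω) (X : Ω → ℝ) : Prop :=
  ∃ f : ℝ → ℝ, (∀ x, 0 ≤ f x) ∧
    Measure.map X μ = (volume : Measure ℝ).withDensity (fun x => ENNReal.ofReal (f x)) ∧
    ∀ x y : ℝ, x ≤ y → (μ {ω | X ω ≤ x}).toReal < 1 → (μ {ω | X ω ≤ y}).toReal < 1 →
      f x / (1 - (μ {ω | X ω ≤ x}).toReal) ≤ f y / (1 - (μ {ω | X ω ≤ y}).toReal)

/-- `Con[X ≥ x] = E[X · 1{X ≥ x}]`. -/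
noncomputable def tailCon {Ω : Type*} [MeasurableSpace Ω] (μ : MeasureTheory.Measure Ω)
    (X : Ω → ℝ) (x : ℝ) : ℝ :=
  ∫ ω in {ω | x ≤ X ω}, X ω ∂μ

/-!
The cumulative hazard `-log Pr[X > x]` of an MHR variable is the integral of its nondecreasing
hazard rate from `0` to `x`, so `-log Pr[X > s β] ≥ s · (-log Pr[X > β])` for `s ≥ 1`; that is,
`Pr[X > s β] ≤ Pr[X > β] ^ s`. An index eliminated when `2 ^ n` candidates remain satisfies
`Pr[X > β₁] ≤ 2 ^ (-n / 2)`, so the tail of `X` beyond `β₁` is dominated by an exponential one, and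
with `L = log₂ (1 / ε)` its contribution above `L β₁` is at most `2 L β₁ √ε ^ n`. There are
`2 ^ (n - 1)` such indices, and `∑ n ≥ 1, L β₁ (2 √ε) ^ n` is at most twice its first term.
-/

open Filter Set Topology

section Calculus

variable {S f : ℝ → ℝ} {a b : ℝ}

lemma continuousOn_of_sub_eq_integral (hint : IntervalIntegrable f volume a b)
    (hS : ∀ x ∈ Icc a b, S a - S x = ∫ t in a..x, f t) : ContinuousOn S (Icc a b) := by
  have hprim : ContinuousOn (fun x ↦ ∫ t in a..x, f t) (Icc a b) :=
    (intervalIntegral.continuousOn_primitive_interval' hint left_mem_uIcc).mono Icc_subset_uIcc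
  exact ((continuousOn_const (c := S a)).sub hprim).congr fun x hx ↦
    by simp [← hS x hx]

/-- At a continuity point of the monotone function `f / S` the function `f` is continuous as well,
so the fundamental theorem of calculus applies there. -/
lemma exists_countable_hasDerivAt_neg (hpos : ∀ x ∈ Icc a b, 0 < S x)
    (hint : IntervalIntegrable f volume a b)
    (hS : ∀ x ∈ Icc a b, S a - S x = ∫ t in a..x, f t)
    (hmono : MonotoneOn (fun x ↦ f x / S x) (Icc a b)) :
    ∃ s : Set ℝ, s.Countable ∧ ∀ x ∈ Ioo a b \ s, HasDerivAt S (-f x) x := by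
  refine ⟨_, hmono.countable_not_continuousWithinAt, fun x ⟨hx, hxs⟩ ↦ ?_⟩
  have hnhds : Icc a b ∈ 𝓝 x := Icc_mem_nhds hx.1 hx.2
  have hx' : x ∈ Icc a b := Ioo_subset_Icc_self hx
  have hdiv : ContinuousAt (fun x ↦ f x / S x) x := by
    have : ContinuousWithinAt (fun x ↦ f x / S x) (Icc a b) x := by
      by_contra h
      exact hxs ⟨hx', h⟩
    exact this.continuousAt hnhds
  have hf : ContinuousAt f x := by
    refine (hdiv.mul ((continuousOn_of_sub_eq_integral hint hS).continuousAt hnhds)).congr ?_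
    filter_upwards [hnhds] with y hy using div_mul_cancel₀ _ (hpos y hy).ne'
  have hmeas : StronglyMeasurableAtFilter f (𝓝 x) :=
    ⟨Ioc a b, Ioc_mem_nhds hx.1 hx.2, hint.aestronglyMeasurable⟩
  have hint' : IntervalIntegrable f volume a x :=
    hint.mono_set (uIcc_subset_uIcc_left (Icc_subset_uIcc hx'))
  have hprim := (intervalIntegral.integral_hasDerivAt_right hint' hmeas hf).const_sub (S a)
  refine hprim.congr_of_eventuallyEq ?_
  filter_upwards [hnhds] with y hy
  rw [← hS y hy, sub_sub_cancel]

lemma integral_div_eq_log_sub_log (hab : a ≤ b) (hpos : ∀ x ∈ Icc a b, 0 < S x)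
    (hint : IntervalIntegrable f volume a b)
    (hS : ∀ x ∈ Icc a b, S a - S x = ∫ t in a..x, f t)
    (hmono : MonotoneOn (fun x ↦ f x / S x) (Icc a b)) :
    ∫ x in a..b, f x / S x = Real.log (S a) - Real.log (S b) := by
  obtain ⟨s, hs, hderiv⟩ := exists_countable_hasDerivAt_neg hpos hint hS hmono
  have hlog : ∀ x ∈ Ioo a b \ s, HasDerivAt (fun x ↦ -Real.log (S x)) (f x / S x) x := by
    intro x hx
    have := ((hderiv x hx).log (hpos x (Ioo_subset_Icc_self hx.1)).ne').neg
    rwa [neg_div, neg_neg] at this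
  rw [integral_eq_of_hasDerivAt_off_countable_of_le _ _ hab hs
    ((continuousOn_of_sub_eq_integral hint hS).log fun x hx ↦ (hpos x hx).ne').neg hlog
    (MonotoneOn.intervalIntegrable (by rwa [uIcc_of_le hab]))]
  exact neg_sub_neg _ _

lemma mul_integral_le_integral_mul_of_monotoneOn {h : ℝ → ℝ} {s : ℝ} (hb : 0 ≤ b) (hs : 1 ≤ s)
    (hmono : MonotoneOn h (Icc 0 (s * b))) :
    s * ∫ x in 0..b, h x ≤ ∫ x in 0..s * b, h x := by
  have hs₀ : 0 ≤ s := zero_le_one.trans hs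
  have hbs : b ≤ s * b := le_mul_of_one_le_left hb hs
  have hscale : MonotoneOn (fun x ↦ h (s * x)) (Icc 0 b) :=
    fun x hx y hy hxy ↦ hmono ⟨mul_nonneg hs₀ hx.1, by gcongr; exact hx.2⟩
      ⟨mul_nonneg hs₀ hy.1, by gcongr; exact hy.2⟩ (by gcongr)
  calc s * ∫ x in 0..b, h x
      ≤ s * ∫ x in 0..b, h (s * x) := by
        gcongr
        refine intervalIntegral.integral_mono_on hb
          (MonotoneOn.intervalIntegrable ?_) (MonotoneOn.intervalIntegrable ?_) fun x hx ↦ ?_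
        · rw [uIcc_of_le hb]
          exact hmono.mono (Icc_subset_Icc_right hbs)
        · rwa [uIcc_of_le hb]
        · exact hmono ⟨hx.1, hx.2.trans hbs⟩ ⟨mul_nonneg hs₀ hx.1, by gcongr; exact hx.2⟩
            (le_mul_of_one_le_left hx.1 hs)
    _ = ∫ x in 0..s * b, h x := by
        rw [intervalIntegral.mul_integral_comp_mul_left, mul_zero]

end Calculus

section Survival

variable {Ω : Type*} [MeasurableSpace Ω] {μ : Measure Ω} {X : Ω → ℝ}

/-- The survival function `x ↦ Pr[X > x]` of the random variable `X`; the strict inequality makes it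
the complement of the cumulative distribution function and matches the one in `alphaQ`. -/
noncomputable def survival (μ : Measure Ω) (X : Ω → ℝ) (x : ℝ) : ℝ :=
  μ.real {ω | x < X ω}

lemma survival_nonneg (x : ℝ) : 0 ≤ survival μ X x :=
  measureReal_nonneg

lemma antitone_survival [IsFiniteMeasure μ] : Antitone (survival μ X) :=
  fun _ _ hxy ↦ measureReal_mono fun _ ↦ hxy.trans_lt

lemma survival_sub_survival [IsFiniteMeasure μ] (hX : Measurable X) {x y : ℝ} (hxy : x ≤ y) :
    survival μ X x - survival μ X y = (μ.map X).real (Ioc x y) := by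
  have hsub : {ω | y < X ω} ⊆ {ω | x < X ω} := fun _ ↦ hxy.trans_lt
  rw [survival, survival, ← measureReal_sdiff hsub (measurableSet_lt measurable_const hX),
    map_measureReal_apply hX measurableSet_Ioc]
  congr 1
  ext ω
  simp

variable [IsProbabilityMeasure μ]

lemma one_sub_measure_le_eq_survival (hX : Measurable X) (x : ℝ) :
    1 - (μ {ω | X ω ≤ x}).toReal = survival μ X x := by
  rw [← measureReal_def, ← probReal_compl_eq_one_sub (measurableSet_le hX measurable_const),
    survival]
  congr 1
  ext ω
  simp

lemma survival_eq_one_sub_cdf (hX : Measurable X) (x : ℝ) :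
    survival μ X x = 1 - cdf (μ.map X) x := by
  have := Measure.isProbabilityMeasure_map (μ := μ) hX.aemeasurable
  rw [cdf_eq_real, map_measureReal_apply hX measurableSet_Iic, ← one_sub_measure_le_eq_survival hX]
  rfl

lemma tendsto_survival_atTop (hX : Measurable X) : Tendsto (survival μ X) atTop (𝓝 0) := by
  simpa only [← survival_eq_one_sub_cdf hX, sub_self] using
    (tendsto_cdf_atTop (μ.map X)).const_sub 1

lemma continuousWithinAt_survival_Ici (hX : Measurable X) (x : ℝ) :
    ContinuousWithinAt (survival μ X) (Ici x) x := by
  exact (continuousWithinAt_const.sub ((cdf (μ.map X)).right_continuous x)).congr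
    (fun y _ ↦ survival_eq_one_sub_cdf hX y) (survival_eq_one_sub_cdf hX x)

lemma survival_le_of_alphaQ_le (hX : Measurable X) {p β : ℝ} (hp : 0 < p)
    (hβ : alphaQ μ X p ≤ β) : survival μ X β ≤ 1 / p := by
  have hmem (τ : ℝ) :
      ENNReal.ofReal (1 / p) ≤ μ {ω | τ < X ω} ↔ 1 / p ≤ survival μ X τ :=
    ENNReal.ofReal_le_iff_le_toReal (measure_ne_top _ _)
  simp only [alphaQ, hmem] at hβ
  have hbdd : BddAbove {τ | 1 / p ≤ survival μ X τ} := by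
    obtain ⟨T, hT⟩ :=
      ((tendsto_survival_atTop (μ := μ) hX).eventually_lt_const (one_div_pos.2 hp)).exists
    exact ⟨T, fun τ hτ ↦ (antitone_survival.reflect_lt (hT.trans_le hτ)).le⟩
  have hright : Tendsto (survival μ X) (𝓝[>] β) (𝓝 (survival μ X β)) :=
    (continuousWithinAt_survival_Ici hX β).mono Ioi_subset_Ici_self
  refine le_of_tendsto hright ?_
  filter_upwards [self_mem_nhdsWithin] with τ hτ
  have hτ' : τ ∉ {τ | 1 / p ≤ survival μ X τ} := notMem_of_csSup_lt (hβ.trans_lt hτ) hbdd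
  exact (not_le.1 hτ').le

end Survival

section TailExpectation

variable {Ω : Type*} [MeasurableSpace Ω] {μ : Measure Ω} [IsFiniteMeasure μ] {X : Ω → ℝ}

lemma tailCon_eq_mul_add_integral_survival (hX : Measurable X) (hint : Integrable X μ) (a : ℝ) :
    tailCon μ X a = a * μ.real {ω | a ≤ X ω} + ∫ t in Ioi 0, survival μ X (a + t) := by
  have hset : MeasurableSet {ω | a ≤ X ω} := measurableSet_le measurable_const hX
  have hexcess : Integrable (fun ω ↦ max (X ω - a) 0) μ :=
    (hint.sub (integrable_const a)).pos_part
  have hsplit : {ω | a ≤ X ω}.indicator X =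
      fun ω ↦ {ω | a ≤ X ω}.indicator (fun _ ↦ a) ω + max (X ω - a) 0 := by
    ext ω
    by_cases h : a ≤ X ω
    · simp [h]
    · simp [h, (not_le.1 h).le]
  have hlayer : ∫ ω, max (X ω - a) 0 ∂μ = ∫ t in Ioi 0, survival μ X (a + t) := by
    rw [hexcess.integral_eq_integral_meas_lt (ae_of_all _ fun _ ↦ le_max_right _ _)]
    refine setIntegral_congr_fun measurableSet_Ioi fun t (ht : 0 < t) ↦ ?_
    simp only [survival, lt_max_iff, ht.not_gt, or_false, lt_sub_iff_add_lt']
  rw [tailCon, ← integral_indicator hset, hsplit,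
    integral_add ((integrable_const a).indicator hset) hexcess, hlayer,
    integral_indicator_const _ hset, smul_eq_mul, mul_comm]

lemma tailCon_le_of_measure_le_exp (hX : Measurable X) (hint : Integrable X μ) {a r : ℝ}
    (ha : 0 ≤ a) (hr : 0 < r) (htail : ∀ t, a ≤ t → μ.real {ω | t ≤ X ω} ≤ Real.exp (-r * t)) :
    tailCon μ X a ≤ (a + 1 / r) * Real.exp (-r * a) := by
  have hexp (t : ℝ) (ht : t ∈ Ioi 0) :
      survival μ X (a + t) ≤ Real.exp (-r * a) * Real.exp (-r * t) := by
    have hsub : {ω | a + t < X ω} ⊆ {ω | a + t ≤ X ω} := fun _ (h : a + t < _) ↦ h.le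
    rw [← Real.exp_add, ← mul_add]
    exact (measureReal_mono hsub).trans
      (htail (a + t) (le_add_of_nonneg_right (mem_Ioi.1 ht).le))
  have hdom : IntegrableOn (fun t ↦ Real.exp (-r * a) * Real.exp (-r * t)) (Ioi 0) :=
    (integrableOn_exp_mul_Ioi (neg_lt_zero.2 hr) 0).const_mul _
  have hint_exp : ∫ t in Ioi 0, Real.exp (-r * a) * Real.exp (-r * t) =
      1 / r * Real.exp (-r * a) := by
    rw [integral_const_mul, integral_exp_mul_Ioi (neg_lt_zero.2 hr), mul_zero, Real.exp_zero,
      neg_div_neg_eq, mul_comm]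
  calc tailCon μ X a
      = a * μ.real {ω | a ≤ X ω} + ∫ t in Ioi 0, survival μ X (a + t) :=
        tailCon_eq_mul_add_integral_survival hX hint a
    _ ≤ a * Real.exp (-r * a) + ∫ t in Ioi 0, Real.exp (-r * a) * Real.exp (-r * t) := by
        refine add_le_add (mul_le_mul_of_nonneg_left (htail a le_rfl) ha) ?_
        exact integral_mono_of_nonneg (ae_of_all _ fun _ ↦ survival_nonneg _) hdom
          (ae_restrict_of_forall_mem measurableSet_Ioi hexp)
    _ = (a + 1 / r) * Real.exp (-r * a) := by rw [hint_exp, add_mul]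

end TailExpectation

namespace IsMHR

variable {Ω : Type*} [MeasurableSpace Ω] {μ : Measure Ω} {X : Ω → ℝ}

lemma nullSingletonClass_map (h : IsMHR μ X) : NullSingletonClass (μ.map X) := by
  obtain ⟨f, -, hf, -⟩ := h
  rw [hf]
  infer_instance

lemma measureReal_le_eq_survival (h : IsMHR μ X) (hX : Measurable X) (x : ℝ) :
    μ.real {ω | x ≤ X ω} = survival μ X x := by
  have := h.nullSingletonClass_map
  have hIci := map_measureReal_apply (μ := μ) hX (measurableSet_Ici (a := x))
  have hIoi := map_measureReal_apply (μ := μ) hX (measurableSet_Ioi (a := x))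
  exact hIci.symm.trans ((measureReal_congr Ioi_ae_eq_Ici.symm).trans hIoi)

variable [IsProbabilityMeasure μ]

lemma survival_zero (h : IsMHR μ X) (hX : Measurable X) (hnonneg : 0 ≤ᵐ[μ] X) :
    survival μ X 0 = 1 := by
  rw [← h.measureReal_le_eq_survival hX]
  have hae := (mem_ae_iff_prob_eq_one (measurableSet_le measurable_const hX)).1 hnonneg
  exact (ENNReal.toReal_eq_one_iff _).2 hae

/-- The density in `IsMHR` need not be measurable everywhere, but where the survival function is
positive it is the product of two monotone functions, the hazard rate and the survival function. -/
lemma exists_density (h : IsMHR μ X) (hX : Measurable X) :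
    ∃ f : ℝ → ℝ, MonotoneOn (fun x ↦ f x / survival μ X x) {x | 0 < survival μ X x} ∧
      ∀ x y, x ≤ y → 0 < survival μ X y → IntervalIntegrable f volume x y ∧
        survival μ X x - survival μ X y = ∫ t in x..y, f t := by
  obtain ⟨f, hf₀, hf, hhazard⟩ := h
  simp only [← sub_pos (b := (μ _).toReal), one_sub_measure_le_eq_survival hX] at hhazard
  have hmono : MonotoneOn (fun x ↦ f x / survival μ X x) {x | 0 < survival μ X x} :=
    fun x hx y hy hxy ↦ hhazard x y hxy hx hy
  refine ⟨f, hmono, fun x y hxy hy ↦ ?_⟩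
  have hpos (t : ℝ) (ht : t ∈ Ioc x y) : 0 < survival μ X t :=
    hy.trans_le (antitone_survival ht.2)
  have hmeas : AEStronglyMeasurable f (volume.restrict (Ioc x y)) := by
    have hrate : AEMeasurable (fun t ↦ f t / survival μ X t) (volume.restrict (Ioc x y)) :=
      aemeasurable_restrict_of_monotoneOn measurableSet_Ioc (hmono.mono hpos)
    have hsurv : Measurable (survival μ X) := antitone_survival.measurable
    refine ((hrate.mul hsurv.aemeasurable).congr ?_).aestronglyMeasurable
    exact ae_restrict_of_forall_mem measurableSet_Ioc fun t ht ↦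
      div_mul_cancel₀ _ (hpos t ht).ne'
  have hlintegral : ∫⁻ t in Ioc x y, ENNReal.ofReal (f t) = μ.map X (Ioc x y) := by
    rw [hf, withDensity_apply _ measurableSet_Ioc]
  constructor
  · rw [intervalIntegrable_iff_integrableOn_Ioc_of_le hxy]
    refine ⟨hmeas, ?_⟩
    rw [hasFiniteIntegral_iff_ofReal (ae_of_all _ hf₀), hlintegral]
    exact measure_lt_top _ _
  · rw [intervalIntegral.integral_of_le hxy,
      integral_eq_lintegral_of_nonneg_ae (ae_of_all _ hf₀) hmeas, hlintegral,
      survival_sub_survival hX hxy, measureReal_def]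

lemma exists_hazardRate (h : IsMHR μ X) (hX : Measurable X) (hnonneg : 0 ≤ᵐ[μ] X) :
    ∃ r : ℝ → ℝ, MonotoneOn r {x | 0 < survival μ X x} ∧
      ∀ x, 0 ≤ x → 0 < survival μ X x → ∫ t in 0..x, r t = -Real.log (survival μ X x) := by
  obtain ⟨f, hmono, hf⟩ := h.exists_density hX
  refine ⟨_, hmono, fun x hx hpos ↦ ?_⟩
  have hpos' (t : ℝ) (ht : t ∈ Icc 0 x) : 0 < survival μ X t :=
    hpos.trans_le (antitone_survival ht.2)
  rw [integral_div_eq_log_sub_log hx hpos' (hf 0 x hx hpos).1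
    (fun t ht ↦ (hf 0 t ht.1 (hpos' t ht)).2) (hmono.mono hpos'), h.survival_zero hX hnonneg,
    Real.log_one, zero_sub]

lemma survival_mul_le_rpow (h : IsMHR μ X) (hX : Measurable X) (hnonneg : 0 ≤ᵐ[μ] X) {β s : ℝ}
    (hβ : 0 ≤ β) (hs : 1 ≤ s) : survival μ X (s * β) ≤ survival μ X β ^ s := by
  rcases (survival_nonneg (μ := μ) (X := X) (s * β)).eq_or_lt with hzero | hpos
  · exact hzero ▸ Real.rpow_nonneg (survival_nonneg β) s
  have hβs : β ≤ s * β := le_mul_of_one_le_left hβ hs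
  have hpos_β : 0 < survival μ X β := hpos.trans_le (antitone_survival hβs)
  obtain ⟨r, hmono, hr⟩ := h.exists_hazardRate hX hnonneg
  have hle := mul_integral_le_integral_mul_of_monotoneOn hβ hs
    (hmono.mono fun t ht ↦ hpos.trans_le (antitone_survival ht.2))
  rw [hr β hβ hpos_β, hr (s * β) (hβ.trans hβs) hpos] at hle
  rw [Real.le_rpow_iff_log_le hpos hpos_β]
  linarith

lemma tailCon_mul_le_of_alphaQ_le (h : IsMHR μ X) (hX : Measurable X) (hnonneg : 0 ≤ᵐ[μ] X)
    (hint : Integrable X μ) {p β L : ℝ} (hp : 1 < p) (hβ : alphaQ μ X p ≤ β) (hL : 1 ≤ L) :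
    tailCon μ X (L * β) ≤ (L + 1 / Real.log p) * β * p ^ (-L) := by
  have hp₀ : 0 < p := one_pos.trans hp
  have hsurv : survival μ X β ≤ 1 / p := survival_le_of_alphaQ_le hX hp₀ hβ
  have hβ₀ : 0 < β := by
    refine antitone_survival.reflect_lt (hsurv.trans_lt ?_)
    rw [h.survival_zero hX hnonneg]
    exact (div_lt_one hp₀).2 hp
  have hexp (s : ℝ) : Real.exp (-(Real.log p / β) * (s * β)) = p ^ (-s) := by
    rw [Real.rpow_def_of_pos hp₀]
    congr 1
    field_simp
  have htail (t : ℝ) (ht : L * β ≤ t) :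
      μ.real {ω | t ≤ X ω} ≤ Real.exp (-(Real.log p / β) * t) := by
    obtain ⟨s, rfl⟩ : ∃ s, t = s * β := ⟨t / β, (div_mul_cancel₀ t hβ₀.ne').symm⟩
    have hs : 1 ≤ s := hL.trans (le_of_mul_le_mul_right ht hβ₀)
    rw [h.measureReal_le_eq_survival hX, hexp]
    calc survival μ X (s * β) ≤ survival μ X β ^ s := h.survival_mul_le_rpow hX hnonneg hβ₀.le hs
      _ ≤ (1 / p) ^ s :=
        Real.rpow_le_rpow (survival_nonneg β) hsurv (zero_le_one.trans hs)
      _ = p ^ (-s) := by rw [one_div, Real.inv_rpow hp₀.le, Real.rpow_neg hp₀.le]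
  calc tailCon μ X (L * β)
      ≤ (L * β + 1 / (Real.log p / β)) * Real.exp (-(Real.log p / β) * (L * β)) :=
        tailCon_le_of_measure_le_exp hX hint (by positivity)
          (div_pos (Real.log_pos hp) hβ₀) htail
    _ = (L + 1 / Real.log p) * β * p ^ (-L) := by
        rw [hexp, one_div_div, add_mul L, one_div_mul_eq_div]

end IsMHR

section Rounds

lemma sqrt_two_pow_rpow_neg_logb {ε : ℝ} (hε : 0 < ε) (n : ℕ) :
    √(2 ^ n) ^ (-Real.logb 2 (1 / ε)) = √ε ^ n := by
  have hbase : (2 : ℝ) ^ (-Real.logb 2 (1 / ε)) = ε := by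
    rw [one_div, Real.logb_inv, neg_neg, Real.rpow_logb two_pos (by norm_num) hε]
  calc √(2 ^ n) ^ (-Real.logb 2 (1 / ε))
      = ((2 : ℝ) ^ (-Real.logb 2 (1 / ε))) ^ ((1 / 2 : ℝ) * n) := by
        rw [Real.sqrt_eq_rpow, ← Real.rpow_natCast, ← Real.rpow_mul two_pos.le,
          ← Real.rpow_mul two_pos.le, ← Real.rpow_mul two_pos.le]
        ring_nf
    _ = √ε ^ n := by
        rw [hbase, Real.rpow_mul hε.le, ← Real.sqrt_eq_rpow, Real.rpow_natCast]

lemma four_le_logb_two_one_div {ε : ℝ} (hε : 0 < ε) (hε' : ε ≤ 1 / 16) :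
    4 ≤ Real.logb 2 (1 / ε) := by
  rw [Real.le_logb_iff_rpow_le one_lt_two (by positivity), le_one_div (by positivity) hε]
  norm_num
  linarith

lemma one_div_log_sqrt_two_pow_le {n : ℕ} (hn : n ≠ 0) : 1 / Real.log √(2 ^ n) ≤ 4 := by
  have hn' : (1 : ℝ) ≤ n := mod_cast Nat.one_le_iff_ne_zero.2 hn
  have hlog : 1 / 4 ≤ Real.log √(2 ^ n) := by
    rw [Real.log_sqrt (by positivity), Real.log_pow]
    nlinarith [Real.log_two_gt_d9]
  exact (one_div_le (by linarith) (by norm_num)).2 hlog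

lemma IsMHR.tailCon_le_of_alphaQ_sqrt_two_pow_le {Ω : Type*} [MeasurableSpace Ω] {μ : Measure Ω}
    [IsProbabilityMeasure μ] {X : Ω → ℝ} (h : IsMHR μ X) (hX : Measurable X)
    (hnonneg : 0 ≤ᵐ[μ] X) (hint : Integrable X μ) {n : ℕ} (hn : n ≠ 0) {β ε : ℝ} (hβ₀ : 0 ≤ β)
    (hβ : alphaQ μ X √(2 ^ n) ≤ β) (hε : 0 < ε) (hε' : ε ≤ 1 / 16) :
    tailCon μ X (Real.logb 2 (1 / ε) * β) ≤ 2 * Real.logb 2 (1 / ε) * β * √ε ^ n := by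
  have hL := four_le_logb_two_one_div hε hε'
  have hp : 1 < √(2 ^ n) := Real.lt_sqrt_of_sq_lt (by simpa using one_lt_pow₀ one_lt_two hn)
  refine (h.tailCon_mul_le_of_alphaQ_le hX hnonneg hint hp hβ (by linarith)).trans ?_
  rw [sqrt_two_pow_rpow_neg_logb hε]
  gcongr
  linarith [one_div_log_sqrt_two_pow_le hn]

lemma sum_tailCon_le_of_card_le {Ω ι : Type*} [MeasurableSpace Ω] {μ : Measure Ω}
    [IsProbabilityMeasure μ] {X : ι → Ω → ℝ} (hmeas : ∀ i, Measurable (X i))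
    (hnonneg : ∀ i, 0 ≤ᵐ[μ] X i) (hint : ∀ i, Integrable (X i) μ) (hMHR : ∀ i, IsMHR μ (X i))
    {s : Finset ι} {n : ℕ} (hcard : s.card ≤ 2 ^ n) {β ε : ℝ} (hβ₀ : 0 ≤ β)
    (hβ : ∀ i ∈ s, alphaQ μ (X i) √(2 ^ (n + 1)) ≤ β) (hε : 0 < ε) (hε' : ε ≤ 1 / 16) :
    ∑ i ∈ s, tailCon μ (X i) (Real.logb 2 (1 / ε) * β) ≤
      Real.logb 2 (1 / ε) * β * (2 * √ε) ^ (n + 1) := by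
  set L := Real.logb 2 (1 / ε)
  have hL : 4 ≤ L := four_le_logb_two_one_div hε hε'
  calc ∑ i ∈ s, tailCon μ (X i) (L * β)
      ≤ s.card • (2 * L * β * √ε ^ (n + 1)) :=
        Finset.sum_le_card_nsmul _ _ _ fun i hi ↦
          (hMHR i).tailCon_le_of_alphaQ_sqrt_two_pow_le (hmeas i) (hnonneg i) (hint i)
            n.succ_ne_zero hβ₀ (hβ i hi) hε hε'
    _ ≤ 2 ^ n • (2 * L * β * √ε ^ (n + 1)) := by gcongr
    _ = L * β * (2 * √ε) ^ (n + 1) := by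
        rw [nsmul_eq_mul]
        push_cast
        ring

lemma sum_sdiff_eq_sum_range_sum_sdiff {ι M : Type*} [DecidableEq ι] [AddCommGroup M]
    {Q : ℕ → Finset ι} {K : ℕ} (hQ : AntitoneOn Q (Iic K)) (g : ι → M) :
    ∑ i ∈ Q 0 \ Q K, g i = ∑ t ∈ Finset.range K, ∑ i ∈ Q t \ Q (t + 1), g i := by
  have hround (t : ℕ) (ht : t ∈ Finset.range K) :
      ∑ i ∈ Q t \ Q (t + 1), g i = ∑ i ∈ Q t, g i - ∑ i ∈ Q (t + 1), g i :=
    Finset.sum_sdiff_eq_sub (hQ (Finset.mem_range.1 ht).le (Finset.mem_range.1 ht) t.le_succ)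
  rw [Finset.sum_congr rfl hround, Finset.sum_range_sub',
    Finset.sum_sdiff_eq_sub (hQ K.zero_le self_mem_Iic K.zero_le)]

lemma sum_range_pow_sub_le {r : ℝ} (hr₀ : 0 ≤ r) (hr : r ≤ 1 / 2) (K : ℕ) :
    ∑ t ∈ Finset.range K, r ^ (K - t) ≤ 2 * r := by
  calc ∑ t ∈ Finset.range K, r ^ (K - t)
      = ∑ n ∈ Finset.range K, r ^ (n + 1) := by
        rw [← Finset.sum_range_reflect]
        refine Finset.sum_congr rfl fun t ht ↦ ?_
        have := Finset.mem_range.1 ht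
        congr 1
        omega
    _ = r * ∑ n ∈ Finset.range K, r ^ n := by simp only [pow_succ', Finset.mul_sum]
    _ ≤ r * (1 - r)⁻¹ := by
        rw [← tsum_geometric_of_lt_one hr₀ (by linarith)]
        gcongr
        exact (summable_geometric_of_lt_one hr₀ (by linarith)).sum_le_tsum _
          fun n _ ↦ pow_nonneg hr₀ n
    _ ≤ r * 2 := by
        gcongr
        exact inv_le_of_inv_le₀ two_pos (by linarith)
    _ = 2 * r := mul_comm r 2

theorem bound_on_sum_of_tails_general {Ω ι : Type*} [MeasurableSpace Ω] [DecidableEq ι]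
    (μ : Measure Ω) [IsProbabilityMeasure μ] (K : ℕ) (X : ι → Ω → ℝ)
    (hmeas : ∀ i, Measurable (X i)) (hnonneg : ∀ i, 0 ≤ᵐ[μ] X i)
    (hint : ∀ i, Integrable (X i) μ) (hMHR : ∀ i, IsMHR μ (X i))
    (Q : ℕ → Finset ι) (hQ : AntitoneOn Q (Iic K))
    (hcard : ∀ t < K, (Q t \ Q (t + 1)).card ≤ 2 ^ (K - (t + 1)))
    (β : ℝ) (hβ₀ : 0 ≤ β)
    (hβ : ∀ t < K, ∀ i ∈ Q t \ Q (t + 1), alphaQ μ (X i) √(2 ^ (K - t)) ≤ β)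
    (ε : ℝ) (hε : 0 < ε) (hε' : ε ≤ 1 / 16) :
    ∑ i ∈ Q 0 \ Q K, tailCon μ (X i) (Real.logb 2 (1 / ε) * β) ≤
      8 * √ε * Real.logb 2 (1 / ε) * β := by
  set L := Real.logb 2 (1 / ε)
  have hL : 4 ≤ L := four_le_logb_two_one_div hε hε'
  have hsqrt : √ε ≤ 1 / 4 := Real.sqrt_le_iff.2 ⟨by norm_num, by linarith⟩
  have hround (t : ℕ) (ht : t ∈ Finset.range K) :
      ∑ i ∈ Q t \ Q (t + 1), tailCon μ (X i) (L * β) ≤ L * β * (2 * √ε) ^ (K - t) := by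
    rw [Finset.mem_range] at ht
    have hKt : K - t = K - (t + 1) + 1 := by omega
    rw [hKt]
    exact sum_tailCon_le_of_card_le hmeas hnonneg hint hMHR (hcard t ht) hβ₀
      (hKt ▸ hβ t ht) hε hε'
  calc ∑ i ∈ Q 0 \ Q K, tailCon μ (X i) (L * β)
      = ∑ t ∈ Finset.range K, ∑ i ∈ Q t \ Q (t + 1), tailCon μ (X i) (L * β) :=
        sum_sdiff_eq_sum_range_sum_sdiff hQ _
    _ ≤ ∑ t ∈ Finset.range K, L * β * (2 * √ε) ^ (K - t) := Finset.sum_le_sum hround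
    _ = L * β * ∑ t ∈ Finset.range K, (2 * √ε) ^ (K - t) := (Finset.mul_sum _ _ _).symm
    _ ≤ L * β * (2 * (2 * √ε)) := by
        gcongr
        exact sum_range_pow_sub_le (by positivity) (by linarith) K
    _ ≤ 8 * √ε * L * β := by
        have : 0 ≤ √ε * L * β := by positivity
        linarith

end Rounds

namespace AlgoRun

variable {Ω : Type*} [MeasurableSpace Ω] {μ : Measure Ω} {K : ℕ} {X : Fin (2 ^ K) → Ω → ℝ}
  {Q : ℕ → Finset (Fin (2 ^ K))} {βt : ℕ → ℝ} {istar : Fin (2 ^ K)} {β₁ β₂ : ℝ}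

lemma antitoneOn (h : AlgoRun μ K X Q βt istar β₁ β₂) : AntitoneOn Q (Iic K) :=
  antitoneOn_of_succ_le ordConnected_Iic fun t _ _ ht ↦ (h.2.1 t (Nat.lt_of_succ_le ht)).1

lemma sdiff_eq_erase (h : AlgoRun μ K X Q βt istar β₁ β₂) :
    Q 0 \ Q K = Finset.univ.erase istar := by
  rw [h.1, h.2.2.1, Finset.sdiff_singleton_eq_erase]

lemma card_eq (h : AlgoRun μ K X Q βt istar β₁ β₂) {t : ℕ} (ht : t ≤ K) :
    (Q t).card = 2 ^ (K - t) := by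
  cases t with
  | zero => rw [h.1, Finset.card_univ, Fintype.card_fin, Nat.sub_zero]
  | succ t => exact (h.2.1 t ht).2.1

lemma card_sdiff_succ (h : AlgoRun μ K X Q βt istar β₁ β₂) {t : ℕ} (ht : t < K) :
    (Q t \ Q (t + 1)).card = 2 ^ (K - (t + 1)) := by
  rw [Finset.card_sdiff_of_subset (h.2.1 t ht).1, h.card_eq ht.le, h.card_eq ht,
    show K - t = K - (t + 1) + 1 by omega, pow_succ, mul_two, Nat.add_sub_cancel]

lemma nonneg (h : AlgoRun μ K X Q βt istar β₁ β₂) : 0 ≤ β₁ := by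
  rw [h.2.2.2.1, Finset.le_fold_max]
  exact Or.inl le_rfl

lemma alphaQ_le (h : AlgoRun μ K X Q βt istar β₁ β₂) {t : ℕ} (ht : t < K) {i : Fin (2 ^ K)}
    (hi : i ∈ Q t \ Q (t + 1)) : alphaQ μ (X i) √(2 ^ (K - t)) ≤ β₁ := by
  obtain ⟨-, hround, -, hβ₁, -⟩ := h
  have hquot : (2 : ℝ) ^ (K - t) = 2 ^ K / 2 ^ t := pow_sub₀ 2 two_ne_zero ht.le
  have hi_le : alphaQ μ (X i) √(2 ^ (K - t)) ≤ βt t := by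
    rw [(hround t ht).2.2.2, hquot, Finset.le_fold_max]
    exact Or.inr ⟨i, hi, le_rfl⟩
  refine hi_le.trans ?_
  rw [hβ₁, Finset.le_fold_max]
  exact Or.inr ⟨t, Finset.mem_range.2 ht, le_rfl⟩

end AlgoRun

/-- For nonnegative continuous MHR random variables `X_1, …, X_k` with
`k = 2^K ≥ 2` and finite expectations, if `β₁` is the first output of Algorithm 1 and `i*` the
surviving index, then for every `ε ∈ (0, 1/16)`:
`Σ_{i ≠ i*} Con[X_i ≥ log₂(1/ε)·β₁] ≤ 8·√ε·log₂(1/ε)·β₁`. -/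
theorem bound_on_sum_of_tails
    {Ω : Type*} [MeasurableSpace Ω] (μ : Measure Ω) [IsProbabilityMeasure μ]
    (K : ℕ) (hK : 1 ≤ K)
    (X : Fin (2 ^ K) → Ω → ℝ)
    (hmeas : ∀ i, Measurable (X i))
    (hnonneg : ∀ i ω, 0 ≤ X i ω)
    (hint : ∀ i, Integrable (X i) μ)
    (hMHR : ∀ i, IsMHR μ (X i))
    (Q : ℕ → Finset (Fin (2 ^ K))) (βt : ℕ → ℝ) (istar : Fin (2 ^ K)) (β₁ β₂ : ℝ)
    (hrun : AlgoRun μ K X Q βt istar β₁ β₂) :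
    ∀ ε : ℝ, 0 < ε → ε < 1 / 16 →
      ∑ i ∈ Finset.univ.erase istar, tailCon μ (X i) (Real.logb 2 (1 / ε) * β₁) ≤
        8 * Real.sqrt ε * Real.logb 2 (1 / ε) * β₁ := by
  intro ε hε hε'
  rw [← hrun.sdiff_eq_erase]
  exact bound_on_sum_of_tails_general μ K X hmeas (fun i ↦ ae_of_all _ (hnonneg i)) hint hMHR Q
    hrun.antitoneOn (fun t ht ↦ (hrun.card_sdiff_succ ht).le) β₁ hrun.nonneg
    (fun t ht i hi ↦ hrun.alphaQ_le ht hi) ε hε hε'.le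
end

section
/- Let f : 2^{[n]} → ℝ be a submodular set function with f(∅) ≥ 0, let k ≤ n be a positive integer and let ε ∈ [0,1] be such that (1−ε)k is an integer. Then max_{S ⊆ [n], |S| ≤ (1−ε)k} f(S) ≥ (1−ε) · max_{S ⊆ [n], |S| ≤ k} f(S). -/
/-!
Deleting the elements of `S` one at a time costs at least as much in total as all the separate
deletions `f S - f (S.erase v)` from the full set `S`, so these sum to at most `f S - f ∅ ≤ f S`.
Hence some deletion loses at most a `1 / |S|` fraction of the value of `f`. Iterating, the losses
telescope: from `|S|` elements down to `m`, at least an `m / |S|` fraction survives.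
-/

open Finset

/-- Submodularity of a set function on the finite subsets of a (possibly infinite) ground set `α`,
in the form of diminishing marginal returns. -/
def IsSubmodular {α G : Type*} [DecidableEq α] [Sub G] [LE G] (f : Finset α → G) : Prop :=
  ∀ S T : Finset α, S ⊆ T → ∀ v ∉ T, f (insert v T) - f T ≤ f (insert v S) - f S

namespace IsSubmodular

variable {α : Type*} [DecidableEq α]

theorem sum_sub_erase_le {G : Type*} [AddCommGroup G] [PartialOrder G] [IsOrderedAddMonoid G]
    {f : Finset α → G} (hf : IsSubmodular f) {S U : Finset α} (hUS : U ⊆ S) :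
    ∑ v ∈ U, (f S - f (S.erase v)) ≤ f U - f ∅ := by
  induction U using Finset.induction_on with
  | empty => simp
  | insert v U hvU ih =>
    obtain ⟨hvS, hUS⟩ := insert_subset_iff.1 hUS
    have marginal : f S - f (S.erase v) ≤ f (insert v U) - f U := by
      simpa only [insert_erase hvS] using
        hf U (S.erase v) (subset_erase.2 ⟨hUS, hvU⟩) v (notMem_erase v S)
    calc ∑ w ∈ insert v U, (f S - f (S.erase w))
        = (f S - f (S.erase v)) + ∑ w ∈ U, (f S - f (S.erase w)) := sum_insert hvU
      _ ≤ (f (insert v U) - f U) + (f U - f ∅) := add_le_add marginal (ih hUS)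
      _ = f (insert v U) - f ∅ := sub_add_sub_cancel _ _ _

variable {R : Type*} [CommRing R] [LinearOrder R] [IsStrictOrderedRing R] {f : Finset α → R}

theorem card_sub_one_mul_le_sum_erase (hf : IsSubmodular f) (hf0 : 0 ≤ f ∅) (S : Finset α) :
    ((#S : R) - 1) * f S ≤ ∑ v ∈ S, f (S.erase v) := by
  have h := hf.sum_sub_erase_le (Subset.refl S)
  rw [sum_sub_distrib, sum_const, nsmul_eq_mul] at h
  linarith

theorem exists_mem_card_sub_one_mul_le (hf : IsSubmodular f) (hf0 : 0 ≤ f ∅) {S : Finset α}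
    (hS : S.Nonempty) : ∃ v ∈ S, ((#S : R) - 1) * f S ≤ #S * f (S.erase v) := by
  refine exists_le_of_sum_le hS ?_
  rw [sum_const, nsmul_eq_mul, ← mul_sum]
  exact mul_le_mul_of_nonneg_left (hf.card_sub_one_mul_le_sum_erase hf0 S) (Nat.cast_nonneg _)

theorem exists_subset_card_eq_mul_le (hf : IsSubmodular f) (hf0 : 0 ≤ f ∅) {m : ℕ} {S : Finset α}
    (hm : m ≤ #S) : ∃ T ⊆ S, #T = m ∧ (m : R) * f S ≤ #S * f T := by
  induction S using Finset.strongInduction with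
  | H S ih =>
    obtain rfl | hmS := hm.eq_or_lt
    · exact ⟨S, Subset.refl S, rfl, le_rfl⟩
    obtain rfl | hm0 := m.eq_zero_or_pos
    · exact ⟨∅, empty_subset S, card_empty, by simpa using mul_nonneg (Nat.cast_nonneg _) hf0⟩
    obtain ⟨v, hvS, hv⟩ := hf.exists_mem_card_sub_one_mul_le hf0 (card_pos.1 (hm0.trans hmS))
    have card_erase : (#(S.erase v) : R) = #S - 1 := cast_card_erase_of_mem hvS
    obtain ⟨T, hTS, hTm, hT⟩ :=
      ih (S.erase v) (erase_ssubset hvS) (by rw [card_erase_of_mem hvS]; lia)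
    rw [card_erase] at hT
    have one_lt_card : (1 : R) < #S := by exact_mod_cast Nat.lt_of_le_of_lt hm0 hmS
    refine ⟨T, hTS.trans (erase_subset v S), hTm,
      le_of_mul_le_mul_left ?_ (sub_pos.2 one_lt_card)⟩
    calc ((#S : R) - 1) * (m * f S)
        = m * ((#S - 1) * f S) := mul_left_comm _ _ _
      _ ≤ m * (#S * f (S.erase v)) := by gcongr
      _ = #S * (m * f (S.erase v)) := mul_left_comm _ _ _
      _ ≤ #S * ((#S - 1) * f T) := by gcongr
      _ = (#S - 1) * (#S * f T) := mul_left_comm _ _ _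

end IsSubmodular

theorem submodular_budget_reduction_general {α R : Type*} [DecidableEq α] [CommRing R]
    [LinearOrder R] [IsStrictOrderedRing R] {f : Finset α → R} (hf0 : 0 ≤ f ∅)
    (hf : IsSubmodular f) {c : R} (hc0 : 0 ≤ c) (hc1 : c ≤ 1) {m : ℕ} {S : Finset α}
    (hm : c * #S ≤ m) : ∃ T ⊆ S, #T ≤ m ∧ c * f S ≤ f T := by
  obtain hfS | hfS := le_total (f S) 0
  · exact ⟨∅, empty_subset S, m.zero_le, (mul_nonpos_of_nonneg_of_nonpos hc0 hfS).trans hf0⟩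
  obtain hSm | hmS := le_or_gt #S m
  · exact ⟨S, Subset.refl S, hSm, mul_le_of_le_one_left hfS hc1⟩
  obtain ⟨T, hTS, hTm, hT⟩ := hf.exists_subset_card_eq_mul_le hf0 hmS.le
  have card_pos : (0 : R) < #S := by exact_mod_cast m.zero_le.trans_lt hmS
  refine ⟨T, hTS, hTm.le, le_of_mul_le_mul_left ?_ card_pos⟩
  calc (#S : R) * (c * f S)
      = c * #S * f S := by ring
    _ ≤ m * f S := by gcongr
    _ ≤ #S * f T := hT

/-- For a submodular set function `f` on `[n]` with `f(∅) ≥ 0`, a positive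
integer `k ≤ n`, and `ε ∈ [0,1]` with `(1-ε)k` an integer `m`:
`max_{|S| ≤ m} f(S) ≥ (1-ε) · max_{|S| ≤ k} f(S)`. -/
theorem submodular_budget_reduction
    (n k : ℕ) (hk : 0 < k) (hkn : k ≤ n)
    (f : Finset (Fin n) → ℝ)
    (hf0 : 0 ≤ f ∅)
    (hsub : ∀ S T : Finset (Fin n), S ⊆ T → ∀ v ∉ T,
      f (insert v T) - f T ≤ f (insert v S) - f S)
    (ε : ℝ) (hε0 : 0 ≤ ε) (hε1 : ε ≤ 1)
    (m : ℕ) (hm : (m : ℝ) = (1 - ε) * k) :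
    ∀ S : Finset (Fin n), S.card ≤ k →
      ∃ T : Finset (Fin n), T.card ≤ m ∧ (1 - ε) * f S ≤ f T := by
  intro S hS
  have budget : (1 - ε) * #S ≤ m := by rw [hm]; gcongr
  exact (submodular_budget_reduction_general hf0 hsub (sub_nonneg.2 hε1) (sub_le_self 1 hε0)
    budget).imp fun _ hT => hT.2
end

section
/- Let Y_1, …, Y_n be nonnegative random variables with finite expectations, let ε ∈ (0,1), τ > 0, and k ≤ n a positive integer, and let W_i = Y_i · 1{Y_i ≥ ε²τ} for each i. For a family Z = (Z_1,…,Z_n) write OPT_max(Z) = max_{S ⊆ [n], |S| = k} E[max_{i∈S} Z_i]. If there exists S₀ ⊆ [n] with |S₀| = k such that Pr[max_{i∈S₀} W_i ≥ τ] ≥ ε, then (1+ε) · OPT_max(W) ≥ OPT_max(Y). -/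
open MeasureTheory

/-!
Discarding values below `ε²τ` lowers the expected maximum over any set by at most `ε²τ` (times the
total mass, if `μ` is not a probability measure). By Markov's inequality the expected maximum of `W`
over `S₀` is at least `ετ`, so that loss is at most `ε` times it, and the better of `S` and `S₀`
absorbs the loss.
-/

section fmax

variable {ι : Type*} {s : Finset ι} {v w : ι → ℝ} {c : ℝ}

theorem fmax_le_iff : fmax s v ≤ c ↔ 0 ≤ c ∧ ∀ i ∈ s, v i ≤ c :=
  Finset.fold_max_le c

theorem fmax_nonneg : 0 ≤ fmax s v :=
  (fmax_le_iff.1 le_rfl).1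

theorem le_fmax {i : ι} (hi : i ∈ s) : v i ≤ fmax s v :=
  (fmax_le_iff.1 le_rfl).2 i hi

theorem fmax_insert [DecidableEq ι] (i : ι) (s : Finset ι) (v : ι → ℝ) :
    fmax (insert i s) v = max (v i) (fmax s v) :=
  Finset.fold_insert_idem

theorem fmax_le_fmax_add (hc : 0 ≤ c) (h : ∀ i ∈ s, v i ≤ w i + c) :
    fmax s v ≤ fmax s w + c :=
  fmax_le_iff.2 ⟨add_nonneg fmax_nonneg hc, fun i hi =>
    (h i hi).trans (add_le_add_left (le_fmax hi) c)⟩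

end fmax

section Integral

variable {ι Ω : Type*} [MeasurableSpace Ω] {μ : Measure Ω} {s : Finset ι} {X Z : ι → Ω → ℝ}

theorem integrable_fmax (hX : ∀ i ∈ s, Integrable (X i) μ) :
    Integrable (fun ω => fmax s (fun i => X i ω)) μ := by
  classical
  induction s using Finset.induction_on with
  | empty => simp [fmax]
  | insert i s _ ih =>
    rw [Finset.forall_mem_insert] at hX
    simp only [fmax_insert]
    exact hX.1.sup (ih hX.2)

theorem integral_fmax_le_integral_fmax_add [IsFiniteMeasure μ] {c : ℝ} (hc : 0 ≤ c)
    (hX : ∀ i ∈ s, Integrable (X i) μ) (hZ : ∀ i ∈ s, Integrable (Z i) μ)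
    (h : ∀ i ∈ s, ∀ ω, X i ω ≤ Z i ω + c) :
    ∫ ω, fmax s (fun i => X i ω) ∂μ ≤
      ∫ ω, fmax s (fun i => Z i ω) ∂μ + c * μ.real Set.univ :=
  calc
    ∫ ω, fmax s (fun i => X i ω) ∂μ ≤ ∫ ω, (fmax s (fun i => Z i ω) + c) ∂μ :=
      integral_mono (integrable_fmax hX) ((integrable_fmax hZ).add (integrable_const c))
        fun ω => fmax_le_fmax_add hc fun i hi => h i hi ω
    _ = ∫ ω, fmax s (fun i => Z i ω) ∂μ + c * μ.real Set.univ := by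
      rw [integral_add (integrable_fmax hZ) (integrable_const c), integral_const, smul_eq_mul,
        mul_comm]

theorem integrable_ite_le {f : Ω → ℝ} (hf : Integrable f μ) (c : ℝ) :
    Integrable (fun ω => if c ≤ f ω then f ω else 0) μ :=
  hf.indicator₀ (nullMeasurableSet_le aemeasurable_const hf.aemeasurable)

end Integral

theorem le_ite_le_add {α : Type*} [AddZeroClass α] [LinearOrder α] [AddLeftMono α] {c : α}
    (hc : 0 ≤ c) (x : α) : x ≤ (if c ≤ x then x else 0) + c := by
  split_ifs with h
  · exact le_add_of_nonneg_right hc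
  · simpa only [zero_add] using (not_le.1 h).le

/-- `𝓕` is the family of feasible sets, over which the paper's `OPT_max` is taken; there it
consists of the sets of size `k`. -/
theorem discarding_small_values_general
    {ι Ω : Type*} [MeasurableSpace Ω] (μ : Measure Ω) [IsFiniteMeasure μ]
    (Y : ι → Ω → ℝ) (hint : ∀ i, Integrable (Y i) μ)
    (ε τ : ℝ) (hε : 0 ≤ ε) (hτ : 0 ≤ τ)
    (W : ι → Ω → ℝ)
    (hW : ∀ i ω, W i ω = if ε ^ 2 * τ ≤ Y i ω then Y i ω else 0)
    (𝓕 : Set (Finset ι)) (S₀ : Finset ι) (hS₀mem : S₀ ∈ 𝓕)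
    (hS₀ : ENNReal.ofReal ε ≤ μ {ω | τ ≤ fmax S₀ (fun i => W i ω)}) :
    ∀ S ∈ 𝓕, ∃ T ∈ 𝓕,
      ∫ ω, fmax S (fun i => Y i ω) ∂μ ≤
        (1 + ε * μ.real Set.univ) * ∫ ω, fmax T (fun i => W i ω) ∂μ := by
  intro S hS
  let E (T : Finset ι) : ℝ := ∫ ω, fmax T (fun i => W i ω) ∂μ
  have hc : 0 ≤ ε ^ 2 * τ := by positivity
  have hWint (i : ι) : Integrable (W i) μ := by
    rw [funext (hW i)]
    exact integrable_ite_le (hint i) (ε ^ 2 * τ)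
  have markov : τ * ε ≤ E S₀ :=
    calc
      τ * ε ≤ τ * μ.real {ω | τ ≤ fmax S₀ (fun i => W i ω)} := by
        gcongr
        exact (ENNReal.ofReal_le_iff_le_toReal (measure_ne_top _ _)).1 hS₀
      _ ≤ E S₀ :=
        mul_meas_ge_le_integral_of_nonneg (.of_forall fun _ => fmax_nonneg)
          (integrable_fmax fun i _ => hWint i) τ
  obtain ⟨T, hT, hST, hS₀T⟩ : ∃ T ∈ 𝓕, E S ≤ E T ∧ E S₀ ≤ E T := by
    rcases le_total (E S) (E S₀) with h | h
    · exact ⟨S₀, hS₀mem, h, le_rfl⟩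
    · exact ⟨S, hS, le_rfl, h⟩
  refine ⟨T, hT, ?_⟩
  calc
    ∫ ω, fmax S (fun i => Y i ω) ∂μ ≤ E S + ε ^ 2 * τ * μ.real Set.univ :=
      integral_fmax_le_integral_fmax_add hc (fun i _ => hint i) (fun i _ => hWint i)
        fun i _ ω => hW i ω ▸ le_ite_le_add hc (Y i ω)
    _ = E S + ε * μ.real Set.univ * (τ * ε) := by ring
    _ ≤ E T + ε * μ.real Set.univ * E T := by
      gcongr
      exact markov.trans hS₀T
    _ = (1 + ε * μ.real Set.univ) * E T := by ring

/-- Let `W_i = Y_i · 1{Y_i ≥ ε²τ}` (discarding small values).  If some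
size-`k` set `S₀` satisfies `Pr[max_{i∈S₀} W_i ≥ τ] ≥ ε`, then
`(1+ε) · OPT_max(W) ≥ OPT_max(Y)`, i.e. for every size-`k` set `S` there is a size-`k` set
`T` with `E[max_{i∈S} Y_i] ≤ (1+ε) · E[max_{i∈T} W_i]`. -/
theorem discarding_small_values
    {Ω : Type*} [MeasurableSpace Ω] (μ : Measure Ω) [IsProbabilityMeasure μ]
    (n k : ℕ) (hk : 0 < k) (hkn : k ≤ n)
    (Y : Fin n → Ω → ℝ)
    (hmeas : ∀ i, Measurable (Y i))
    (hnonneg : ∀ i ω, 0 ≤ Y i ω)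
    (hint : ∀ i, Integrable (Y i) μ)
    (ε τ : ℝ) (hε0 : 0 < ε) (hε1 : ε < 1) (hτ : 0 < τ)
    (W : Fin n → Ω → ℝ)
    (hW : ∀ i ω, W i ω = if ε ^ 2 * τ ≤ Y i ω then Y i ω else 0)
    (S₀ : Finset (Fin n)) (hS₀card : S₀.card = k)
    (hS₀ : ENNReal.ofReal ε ≤ μ {ω | τ ≤ fmax S₀ (fun i => W i ω)}) :
    ∀ S : Finset (Fin n), S.card = k →
      ∃ T : Finset (Fin n), T.card = k ∧
        ∫ ω, fmax S (fun i => Y i ω) ∂μ ≤ (1 + ε) * ∫ ω, fmax T (fun i => W i ω) ∂μ := by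
  simpa using discarding_small_values_general μ Y hint ε τ hε0.le hτ.le W hW
    {S | S.card = k} S₀ hS₀card hS₀
end
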